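/- arXiv:1603.06069 — 3 statements merged into one kernel-verified Lean document; each statement's English description precedes it below -/
import Mathlib

section
/- For every j ∈ {1,…,r} and every k with x_{k,rn} ∈ [a_j,b_j], the quadrature weight λ_{k,rn}^{(j)} is strictly positive. -/
open MeasureTheory

/-!
Integrating the Lagrange interpolant at the nodes `s` is exact in degree less than `#s + m` as soon
as the nodal polynomial of `s` is orthogonal to all polynomials of degree less than `m`. Let `u` be
the set of nodes in the interval of `μ`, let `i ∈ u`, and let `L` and `M` be the Lagrange basis
polynomials at `i` for the nodes `s` and `u`. Then `L * M` is `1` at the node `i`, vanishes at the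
other nodes and has degree `#s + #u - 2`, so exactness with `m = #u - 1` identifies the weight at
`i` with `∫ L * M ∂μ`. Moreover `L * M` is `M ^ 2` times the factors `(t - v k) / (v i - v k)` for
`k ∈ s \ u`, which are nonnegative on the interval because `v k` lies to one side of it.
-/

open Polynomial Lagrange Finset

section Polynomial

variable {μ : Measure ℝ}

theorem integrable_eval_of_integrable_pow (hmom : ∀ k : ℕ, Integrable (fun t : ℝ => t ^ k) μ)
    (p : ℝ[X]) : Integrable (fun t => p.eval t) μ := by
  simp only [eval_eq_sum_range]
  exact integrable_finsetSum _ fun k _ => (hmom k).const_mul _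

theorem integral_eval_mul_eq_zero_of_degree_lt
    (hmom : ∀ k : ℕ, Integrable (fun t : ℝ => t ^ k) μ) {p q : ℝ[X]} {m : ℕ}
    (horth : ∀ k < m, ∫ t, p.eval t * t ^ k ∂μ = 0) (hq : q.degree < m) :
    ∫ t, (p * q).eval t ∂μ = 0 := by
  have hexpand (t : ℝ) :
      (p * q).eval t = ∑ k ∈ q.support, q.coeff k * (p.eval t * t ^ k) := by
    rw [eval_mul, eval_eq_sum (p := q), Polynomial.sum, mul_sum]
    exact sum_congr rfl fun k _ => mul_left_comm _ _ _
  have hint (k : ℕ) : Integrable (fun t => p.eval t * t ^ k) μ := by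
    have hpX := integrable_eval_of_integrable_pow hmom (p * X ^ k)
    simpa only [eval_mul, eval_pow, eval_X] using hpX
  simp only [hexpand]
  rw [integral_finsetSum _ fun k _ => (hint k).const_mul _]
  refine sum_eq_zero fun k hk => ?_
  have hkm : k < m := Nat.cast_lt.mp ((le_degree_of_mem_supp k hk).trans_lt hq)
  rw [integral_const_mul, horth k hkm, mul_zero]

theorem integral_eval_pos_of_ae_nonneg (hinf : ∀ s : Finset ℝ, μ (s : Set ℝ)ᶜ ≠ 0) {p : ℝ[X]}
    (hp : p ≠ 0) (hint : Integrable (fun t => p.eval t) μ) (hnonneg : ∀ᵐ t ∂μ, 0 ≤ p.eval t) :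
    0 < ∫ t, p.eval t ∂μ := by
  have hsupport : Function.support (fun t => p.eval t) = (p.roots.toFinset : Set ℝ)ᶜ := by
    ext t
    simp [hp]
  rw [integral_pos_iff_support_of_nonneg_ae hnonneg hint, hsupport]
  exact pos_iff_ne_zero.mpr (hinf _)

end Polynomial

theorem mem_upperBounds_union_lowerBounds_of_notMem {α : Type*} [LinearOrder α] {S : Set α}
    (hS : S.OrdConnected) {y : α} (hy : y ∉ S) : y ∈ upperBounds S ∪ lowerBounds S := by
  by_contra hbounds
  simp only [Set.mem_union, mem_upperBounds, mem_lowerBounds, not_or, not_forall, not_le]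
    at hbounds
  obtain ⟨⟨c, hc, hyc⟩, d, hd, hdy⟩ := hbounds
  exact hy (hS.out hd hc ⟨hdy.le, hyc.le⟩)

section LagrangeBasis

variable {ι F : Type*} [DecidableEq ι] [Field F] {s u : Finset ι} {v : ι → F} {i : ι}

theorem modByMonic_nodal_eq_interpolate (hv : Set.InjOn v s) (p : F[X]) :
    p %ₘ nodal s v = interpolate s v fun i => p.eval (v i) := by
  refine eq_interpolate_of_eval_eq _ hv ?_ fun i hi => ?_
  · simpa only [degree_nodal] using degree_modByMonic_lt p (nodal_monic (s := s) (v := v))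
  · have heval := congrArg (eval (v i)) (modByMonic_add_div p (nodal s v))
    rwa [eval_add, eval_mul, eval_nodal_at_node hi, zero_mul, add_zero] at heval

theorem basis_eq_basis_mul_prod_sdiff (hu : u ⊆ s) (hi : i ∈ u) :
    Lagrange.basis s v i = Lagrange.basis u v i * ∏ k ∈ s \ u, basisDivisor (v i) (v k) := by
  have herase : s.erase i \ u.erase i = s \ u := by grind
  rw [Lagrange.basis, Lagrange.basis, ← prod_sdiff (erase_subset_erase i hu), herase, mul_comm]

variable [LinearOrder F] [IsStrictOrderedRing F]

theorem eval_basisDivisor_nonneg {S : Set F} {x y t : F} (hx : x ∈ S) (ht : t ∈ S)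
    (hy : y ∈ upperBounds S ∪ lowerBounds S) : 0 ≤ (basisDivisor x y).eval t := by
  have heval : (basisDivisor x y).eval t = (x - y)⁻¹ * (t - y) := by simp [basisDivisor]
  rw [heval]
  rcases hy with hy | hy
  · exact mul_nonneg_of_nonpos_of_nonpos (inv_nonpos.mpr (sub_nonpos.mpr (hy hx)))
      (sub_nonpos.mpr (hy ht))
  · exact mul_nonneg (inv_nonneg.mpr (sub_nonneg.mpr (hy hx))) (sub_nonneg.mpr (hy ht))

theorem eval_basis_mul_basis_nonneg (hu : u ⊆ s) (hi : i ∈ u) {S : Set F} {t : F}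
    (hvi : v i ∈ S) (hvu : ∀ k ∈ s \ u, v k ∈ upperBounds S ∪ lowerBounds S) (ht : t ∈ S) :
    0 ≤ (Lagrange.basis s v i * Lagrange.basis u v i).eval t := by
  rw [basis_eq_basis_mul_prod_sdiff hu hi, mul_right_comm, eval_mul, eval_mul, eval_prod]
  exact mul_nonneg (mul_self_nonneg _)
    (prod_nonneg fun k hk => eval_basisDivisor_nonneg hvi ht (hvu k hk))

end LagrangeBasis

section Quadrature

variable {ι : Type*} [DecidableEq ι] {μ : Measure ℝ} {s u : Finset ι} {v : ι → ℝ} {i : ι}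

/-- The weight at the node `v i` of the interpolatory quadrature rule for `μ` with nodes `v k`,
`k ∈ s`: the integral of the fundamental Lagrange polynomial of that node. -/
noncomputable def quadratureWeight (μ : Measure ℝ) (s : Finset ι) (v : ι → ℝ) (i : ι) : ℝ :=
  ∫ t, (Lagrange.basis s v i).eval t ∂μ

theorem integral_eval_interpolate (hmom : ∀ k : ℕ, Integrable (fun t : ℝ => t ^ k) μ)
    (y : ι → ℝ) :
    ∫ t, (interpolate s v y).eval t ∂μ = ∑ k ∈ s, y k * quadratureWeight μ s v k := by
  simp only [interpolate_apply, eval_finsetSum, eval_mul, eval_C]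
  rw [integral_finsetSum _ fun k _ => (integrable_eval_of_integrable_pow hmom _).const_mul _]
  simp only [integral_const_mul, quadratureWeight]

theorem integral_eval_eq_sum_quadratureWeight
    (hmom : ∀ k : ℕ, Integrable (fun t : ℝ => t ^ k) μ) (hv : Set.InjOn v s) {m : ℕ}
    (horth : ∀ k < m, ∫ t, (nodal s v).eval t * t ^ k ∂μ = 0) {p : ℝ[X]}
    (hp : p.degree < ↑(#s + m)) :
    ∫ t, p.eval t ∂μ = ∑ k ∈ s, p.eval (v k) * quadratureWeight μ s v k := by
  have hquot : (p /ₘ nodal s v).degree < m := by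
    rcases lt_or_ge p.degree (nodal s v).degree with hlt | hge
    · rw [(divByMonic_eq_zero_iff nodal_monic).mpr hlt, degree_zero]
      exact WithBot.bot_lt_coe m
    · rw [← degree_add_divByMonic nodal_monic hge, degree_nodal, Nat.cast_add] at hp
      exact lt_of_add_lt_add_left hp
  have hint := integrable_eval_of_integrable_pow hmom
  calc ∫ t, p.eval t ∂μ
      = ∫ t, ((p %ₘ nodal s v).eval t + (nodal s v * (p /ₘ nodal s v)).eval t) ∂μ := by
        simp only [← eval_add, modByMonic_add_div]
    _ = ∫ t, (p %ₘ nodal s v).eval t ∂μ := by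
        rw [integral_add (hint _) (hint _),
          integral_eval_mul_eq_zero_of_degree_lt hmom horth hquot, add_zero]
    _ = ∑ k ∈ s, p.eval (v k) * quadratureWeight μ s v k := by
        rw [modByMonic_nodal_eq_interpolate hv, integral_eval_interpolate hmom]

theorem quadratureWeight_eq_integral_basis_mul_basis
    (hmom : ∀ k : ℕ, Integrable (fun t : ℝ => t ^ k) μ) (hv : Set.InjOn v s) (hu : u ⊆ s)
    (hi : i ∈ u) (horth : ∀ k < #u - 1, ∫ t, (nodal s v).eval t * t ^ k ∂μ = 0) :
    quadratureWeight μ s v i =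
      ∫ t, (Lagrange.basis s v i * Lagrange.basis u v i).eval t ∂μ := by
  have hvu : Set.InjOn v u := hv.mono hu
  have hdegree :
      (Lagrange.basis s v i * Lagrange.basis u v i).degree < ↑(#s + (#u - 1)) := by
    have hs : #s - 1 < #s := Nat.sub_lt (card_pos.mpr ⟨i, hu hi⟩) one_pos
    rw [degree_mul, degree_basis hv (hu hi), degree_basis hvu hi, ← Nat.cast_add, Nat.cast_lt]
    exact Nat.add_lt_add_right hs _
  rw [integral_eval_eq_sum_quadratureWeight hmom hv horth hdegree,
    sum_eq_single_of_mem i (hu hi) fun k hk hki => ?_]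
  · rw [eval_mul, eval_basis_self hv (hu hi), eval_basis_self hvu hi, one_mul, one_mul]
  · rw [eval_mul, eval_basis_of_ne hki.symm hk, zero_mul, zero_mul]

theorem angelesco_weights_positive_on_own_interval_general
    (hmom : ∀ k : ℕ, Integrable (fun t : ℝ => t ^ k) μ)
    (hinf : ∀ A : Finset ℝ, μ (A : Set ℝ)ᶜ ≠ 0) {S : Set ℝ} [DecidablePred (· ∈ S)]
    (hS : S.OrdConnected) (hμS : ∀ᵐ t ∂μ, t ∈ S) (hv : Set.InjOn v s)
    (horth : ∀ k < #{l ∈ s | v l ∈ S} - 1, ∫ t, (nodal s v).eval t * t ^ k ∂μ = 0)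
    (hi : i ∈ s) (hvi : v i ∈ S) :
    0 < quadratureWeight μ s v i := by
  set u : Finset ι := {l ∈ s | v l ∈ S}
  have hu : u ⊆ s := filter_subset _ s
  have hiu : i ∈ u := mem_filter.mpr ⟨hi, hvi⟩
  have hvu (k : ι) (hk : k ∈ s \ u) : v k ∈ upperBounds S ∪ lowerBounds S :=
    mem_upperBounds_union_lowerBounds_of_notMem hS (by grind)
  rw [quadratureWeight_eq_integral_basis_mul_basis hmom hv hu hiu horth]
  refine integral_eval_pos_of_ae_nonneg hinf ?_ (integrable_eval_of_integrable_pow hmom _) ?_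
  · exact mul_ne_zero (basis_ne_zero hv hi) (basis_ne_zero (hv.mono hu) hiu)
  · filter_upwards [hμS] with t ht using eval_basis_mul_basis_nonneg hu hiu hvi hvu ht

end Quadrature

section OrderedIntervals

variable {ι κ α : Type*} [LinearOrder ι] [LinearOrder α] {a b : ι → α}

theorem mem_Icc_iff_eq_of_mem_Ioo (hord : ∀ j k, j < k → b j ≤ a k) {j k : ι} {y : α}
    (hy : y ∈ Set.Ioo (a k) (b k)) : y ∈ Set.Icc (a j) (b j) ↔ k = j := by
  refine ⟨fun hyj => ?_, fun hkj => hkj ▸ Set.Ioo_subset_Icc_self hy⟩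
  rcases lt_trichotomy k j with hlt | heq | hgt
  · exact absurd (hy.2.trans_le ((hord k j hlt).trans hyj.1)) (lt_irrefl y)
  · exact heq
  · exact absurd ((hyj.2.trans (hord j k hgt)).trans_lt hy.1) (lt_irrefl y)

variable {x : ι → κ → α}

theorem injective_uncurry_of_mem_Ioo (hord : ∀ j k, j < k → b j ≤ a k)
    (hx : ∀ j, Function.Injective (x j)) (hmem : ∀ j i, x j i ∈ Set.Ioo (a j) (b j)) :
    Function.Injective fun q : ι × κ => x q.1 q.2 := by
  rintro ⟨j, i⟩ ⟨k, l⟩ (heq : x j i = x k l)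
  obtain rfl : j = k :=
    (mem_Icc_iff_eq_of_mem_Ioo hord (hmem j i)).mp (heq ▸ Set.Ioo_subset_Icc_self (hmem k l))
  rw [hx j heq]

theorem card_filter_mem_Icc_of_mem_Ioo [Fintype ι] [Fintype κ] (hord : ∀ j k, j < k → b j ≤ a k)
    (hmem : ∀ j i, x j i ∈ Set.Ioo (a j) (b j)) (j : ι) :
    #{q : ι × κ | x q.1 q.2 ∈ Set.Icc (a j) (b j)} = Fintype.card κ := by
  have hfilter : ({q : ι × κ | x q.1 q.2 ∈ Set.Icc (a j) (b j)} : Finset (ι × κ)) =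
      {j} ×ˢ univ := by
    ext q
    simp only [mem_filter_univ, mem_product, mem_singleton, mem_univ, and_true,
      mem_Icc_iff_eq_of_mem_Ioo hord (hmem q.1 q.2)]
  rw [hfilter, card_product, card_singleton, one_mul, card_univ]

end OrderedIntervals

/-- **Positivity of the quadrature weights at the nodes of their own interval**
(Angelesco system with `r` disjoint intervals).
The nodes are the zeros of the diagonal type II multiple orthogonal polynomial,
with exactly `n` simple zeros `x j 0 < ⋯ < x j (n-1)` in each interval `(a j, b j)`.
For every `j`, the quadrature weight of the `j`-th rule at any node lying in
`[a j, b j]` is strictly positive. -/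
theorem angelesco_weights_positive_on_own_interval
    (r n : ℕ) (hr : 1 ≤ r) (hn : 1 ≤ n)
    (μ : Fin r → Measure ℝ) [∀ j, IsFiniteMeasure (μ j)]
    (hmom : ∀ j, ∀ k : ℕ, Integrable (fun t : ℝ => t ^ k) (μ j))
    (a b : Fin r → ℝ) (hab : ∀ j, a j < b j)
    (hord : ∀ j k : Fin r, j < k → b j ≤ a k)
    (hsupp : ∀ j, (μ j) (Set.Icc (a j) (b j))ᶜ = 0)
    (hinf : ∀ j, ∀ s : Finset ℝ, (μ j) ((s : Set ℝ))ᶜ ≠ 0)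
    (x : Fin r → Fin n → ℝ) (hmono : ∀ j, StrictMono (x j))
    (hmem : ∀ j i, x j i ∈ Set.Ioo (a j) (b j))
    (horth : ∀ j, ∀ k < n,
      ∫ t, (∏ p : Fin r × Fin n, (t - x p.1 p.2)) * t ^ k ∂(μ j) = 0)
    (w : Fin r → Fin r × Fin n → ℝ)
    (hw : ∀ j p, w j p =
      ∫ t, (Lagrange.basis Finset.univ (fun q : Fin r × Fin n => x q.1 q.2) p).eval t ∂(μ j)) :
    ∀ j : Fin r, ∀ i : Fin n, 0 < w j (j, i) := by
  intro j i
  have hv : Function.Injective fun q : Fin r × Fin n => x q.1 q.2 :=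
    injective_uncurry_of_mem_Ioo hord (fun k => (hmono k).injective) hmem
  have hcard : #{q : Fin r × Fin n | x q.1 q.2 ∈ Set.Icc (a j) (b j)} = n := by
    rw [card_filter_mem_Icc_of_mem_Ioo hord hmem, Fintype.card_fin]
  rw [hw]
  refine angelesco_weights_positive_on_own_interval_general (hmom j) (hinf j) Set.ordConnected_Icc
    (hsupp j) hv.injOn (fun k hk => ?_) (mem_univ (j, i)) (Set.Ioo_subset_Icc_self (hmem j i))
  simpa only [eval_nodal] using horth j k (by lia)
end

section
/- For every n ≥ 3 and every 2 ≤ ℓ ≤ n − 1, one has λ_{ℓ,2n}^{(1)} ≤ μ₁([x_{ℓ−1,2n}, x_{ℓ+1,2n}]). -/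
open MeasureTheory

/-- The data of the diagonal type II multiple orthogonal polynomial for an
Angelesco system with two intervals: its `2n` zeros, listed in increasing
order, with `n` of them in `(a₁,b₁)` and `n` of them in `(a₂,b₂)`, and the
multiple orthogonality conditions. -/
structure Angelesco (μ₁ μ₂ : Measure ℝ) (a₁ b₁ a₂ b₂ : ℝ) (n : ℕ) where
  x : Fin (2 * n) → ℝ
  mono : StrictMono x
  mem1 : ∀ i : Fin (2 * n), (i : ℕ) < n → x i ∈ Set.Ioo a₁ b₁
  mem2 : ∀ i : Fin (2 * n), n ≤ (i : ℕ) → x i ∈ Set.Ioo a₂ b₂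
  orth1 : ∀ k < n, ∫ t, (∏ i, (t - x i)) * t ^ k ∂μ₁ = 0
  orth2 : ∀ k < n, ∫ t, (∏ i, (t - x i)) * t ^ k ∂μ₂ = 0

/-- The quadrature weight `λ_{k,2n}^{(μ)} = ∫ ℓ_{k,2n} dμ`, where `ℓ_{k,2n}` is the
`k`-th fundamental Lagrange polynomial for the nodes `x_{1,2n} < ⋯ < x_{2n,2n}`. -/
noncomputable def qweight {μ₁ μ₂ : Measure ℝ} {a₁ b₁ a₂ b₂ : ℝ} {n : ℕ}
    (ad : Angelesco μ₁ μ₂ a₁ b₁ a₂ b₂ n) (μ : Measure ℝ) (k : Fin (2 * n)) : ℝ :=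
  ∫ t, (Lagrange.basis Finset.univ ad.x k).eval t ∂μ

/-!
Let `B` be the fundamental polynomial of the node `x j`. Multiplying `B` by any polynomial `G` with
`G (x j) = 1` of degree at most the order of orthogonality keeps the values at the nodes, hence, by
exactness of the quadrature rule, the integral. So it suffices to find `G` such that `B * G` is at
most the indicator function of `[x i, x k]`, where `x i < x j < x k` are consecutive nodes.

With `y = t - x j`, every factor of `B` has the form `1 + u * y`. Taking for `G` the product of
the factors of the remaining nodes of the interval squares these, so they no longer influence the
sign of `B * G`. There is room for two more factors `1 + γ * y` and `1 + δ * y`. Their sum of slopes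
is chosen so that all slopes of `B * G` add up to zero: then `1 + u * y ≤ exp (u * y)` gives
`B * G ≤ 1` between the neighbours. How the sum is split between `γ` and `δ` makes `B * G ≤ 0`
elsewhere.
-/

section LinearFactors

variable {ι : Type*} {u : ι → ℝ} {t : ℝ}

lemma prod_one_add_mul_le_exp_sum_mul {s : Finset ι} (h : ∀ l ∈ s, 0 ≤ 1 + u l * t) :
    ∏ l ∈ s, (1 + u l * t) ≤ Real.exp ((∑ l ∈ s, u l) * t) := by
  rw [Finset.sum_mul, Real.exp_sum]
  exact Finset.prod_le_prod h fun l _ ↦ (add_comm _ _).trans_le (Real.add_one_le_exp _)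

lemma prod_mul_prod_mul_le_one {s s' : Finset ι} {γ δ : ℝ} (hs : ∀ l ∈ s, 0 ≤ 1 + u l * t)
    (hs' : ∀ l ∈ s', 0 ≤ 1 + u l * t) (hγ : 0 ≤ 1 + γ * t)
    (hsum : γ + δ = -(∑ l ∈ s, u l + ∑ l ∈ s', u l)) :
    (∏ l ∈ s, (1 + u l * t)) * ((∏ l ∈ s', (1 + u l * t)) * ((1 + γ * t) * (1 + δ * t))) ≤ 1 := by
  have hprod := Finset.prod_nonneg hs
  have hprod' := Finset.prod_nonneg hs'
  rcases le_total 0 (1 + δ * t) with hδ | hδ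
  · have le_exp (v : ℝ) : 1 + v * t ≤ Real.exp (v * t) :=
      (add_comm _ _).trans_le (Real.add_one_le_exp _)
    calc _ ≤ Real.exp ((∑ l ∈ s, u l) * t) * (Real.exp ((∑ l ∈ s', u l) * t) *
          (Real.exp (γ * t) * Real.exp (δ * t))) := by
          gcongr
          exacts [prod_one_add_mul_le_exp_sum_mul hs, prod_one_add_mul_le_exp_sum_mul hs',
            le_exp γ, le_exp δ]
      _ = 1 := by
          rw [← Real.exp_add, ← Real.exp_add, ← Real.exp_add, Real.exp_eq_one_iff]
          linear_combination t * hsum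
  · have : (1 + γ * t) * (1 + δ * t) ≤ 0 := mul_nonpos_of_nonneg_of_nonpos hγ hδ
    exact (mul_nonpos_of_nonneg_of_nonpos hprod
      (mul_nonpos_of_nonneg_of_nonpos hprod' this)).trans zero_le_one

variable {p m : ℝ}

lemma one_add_mul_nonneg_of_mem_Icc {γ : ℝ} (hγ : γ ∈ Set.Icc m p) (hp : 0 ≤ 1 + p * t)
    (hm : 0 ≤ 1 + m * t) : 0 ≤ 1 + γ * t := by
  rcases le_total 0 t with ht | ht
  · linarith [mul_le_mul_of_nonneg_right hγ.1 ht]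
  · linarith [mul_le_mul_of_nonpos_right hγ.2 ht]

lemma one_add_mul_mul_one_add_mul_nonneg {γ δ : ℝ} (hp : 0 < p) (hm : m < 0)
    (hcases : γ = δ ∨ (γ = p ∧ p ≤ δ) ∨ (γ = m ∧ δ ≤ m)) (ht : 1 + p * t < 0 ∨ 1 + m * t < 0) :
    0 ≤ (1 + γ * t) * (1 + δ * t) := by
  rcases hcases with rfl | ⟨rfl, hδ⟩ | ⟨rfl, hδ⟩
  · exact mul_self_nonneg _
  · rcases ht with ht | ht
    · have : t < 0 := by nlinarith
      exact mul_nonneg_of_nonpos_of_nonpos ht.le (by nlinarith)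
    · have : 0 < t := by nlinarith
      exact mul_nonneg (by nlinarith) (by nlinarith)
  · rcases ht with ht | ht
    · have : t < 0 := by nlinarith
      exact mul_nonneg (by nlinarith) (by nlinarith)
    · have : 0 < t := by nlinarith
      exact mul_nonneg_of_nonpos_of_nonpos ht.le (by nlinarith)

-- `γ` is half of the prescribed sum, clamped to `[m, p]`.
lemma exists_add_eq_and_mem_Icc (hmp : m ≤ p) (e : ℝ) : ∃ γ δ : ℝ, γ + δ = e ∧ γ ∈ Set.Icc m p ∧
    (γ = δ ∨ (γ = p ∧ p ≤ δ) ∨ (γ = m ∧ δ ≤ m)) := by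
  rcases le_total p (e / 2) with hpe | hpe
  · exact ⟨p, e - p, by ring, ⟨hmp, le_rfl⟩, .inr (.inl ⟨rfl, by linarith⟩)⟩
  rcases le_total m (e / 2) with hme | hme
  · exact ⟨e / 2, e / 2, by ring, ⟨hme, hpe⟩, .inl rfl⟩
  · exact ⟨m, e - m, by ring, ⟨le_rfl, hmp⟩, .inr (.inr ⟨rfl, by linarith⟩)⟩

lemma one_add_mul_mul_one_add_mul_nonpos (hp : 0 < p) (hm : m < 0)
    (ht : 1 + p * t < 0 ∨ 1 + m * t < 0) : (1 + p * t) * (1 + m * t) ≤ 0 := by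
  rcases ht with ht | ht
  · have : t < 0 := by nlinarith
    exact mul_nonpos_of_nonpos_of_nonneg ht.le (by nlinarith)
  · have : 0 < t := by nlinarith
    exact mul_nonpos_of_nonneg_of_nonpos (by nlinarith) ht.le

end LinearFactors

section Multiplier

open Polynomial Finset

section Field

variable {ι K : Type*} [Field K]

/-- The polynomial of degree at most one with value `1` at `c` and slope `v`. In this form the
Lagrange basis divisors and the two free factors of the multiplier are treated alike. -/
noncomputable def normalizedLinear (c v : K) : K[X] := 1 + C v * (X - C c)

@[simp]
lemma eval_normalizedLinear (c v t : K) : (normalizedLinear c v).eval t = 1 + v * (t - c) := by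
  simp [normalizedLinear]

lemma natDegree_normalizedLinear_le (c v : K) : (normalizedLinear c v).natDegree ≤ 1 := by
  unfold normalizedLinear
  compute_degree

lemma natDegree_prod_normalizedLinear_le (s : Finset ι) (c : K) (u : ι → K) :
    (∏ l ∈ s, normalizedLinear c (u l)).natDegree ≤ #s := by
  calc _ ≤ ∑ l ∈ s, (normalizedLinear c (u l)).natDegree := natDegree_prod_le _ _
    _ ≤ #s • 1 := sum_le_card_nsmul _ _ _ fun l _ ↦ natDegree_normalizedLinear_le c (u l)
    _ = #s := by simp

lemma natDegree_prod_normalizedLinear_mul_le (s : Finset ι) (c : K) (u : ι → K) (γ δ : K) :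
    ((∏ l ∈ s, normalizedLinear c (u l)) *
      (normalizedLinear c γ * normalizedLinear c δ)).natDegree ≤ #s + 2 :=
  natDegree_mul_le_of_le (natDegree_prod_normalizedLinear_le s c u)
    (natDegree_mul_le_of_le (natDegree_normalizedLinear_le c γ) (natDegree_normalizedLinear_le c δ))

lemma basisDivisor_eq_normalizedLinear {c y : K} (hcy : c ≠ y) :
    Lagrange.basisDivisor c y = normalizedLinear c (c - y)⁻¹ := by
  have hC : C (c - y)⁻¹ * (C c - C y) = 1 := by
    rw [← C_sub, ← C_mul, inv_mul_cancel₀ (sub_ne_zero.2 hcy), C_1]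
  rw [Lagrange.basisDivisor, normalizedLinear, ← hC]
  ring

lemma eval_basis_eq_prod_erase [DecidableEq ι] {s : Finset ι} {x : ι → K} (hx : Set.InjOn x s)
    {j : ι} (hj : j ∈ s) (t : K) :
    (Lagrange.basis s x j).eval t = ∏ l ∈ s.erase j, (1 + (x j - x l)⁻¹ * (t - x j)) := by
  rw [Lagrange.basis, eval_prod]
  refine prod_congr rfl fun l hl ↦ ?_
  obtain ⟨hlj, hls⟩ := mem_erase.1 hl
  rw [basisDivisor_eq_normalizedLinear (hx.ne hj hls hlj.symm), eval_normalizedLinear]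

lemma one_add_inv_mul_sub_eq_div {c y : K} (hcy : c ≠ y) (t : K) :
    1 + (c - y)⁻¹ * (t - c) = (t - y) / (c - y) := by
  field_simp [sub_ne_zero.2 hcy]
  ring

end Field

lemma one_add_inv_mul_sub_nonneg_iff {c y t : ℝ} (hcy : c ≠ y) :
    0 ≤ 1 + (c - y)⁻¹ * (t - c) ↔ 0 ≤ (t - y) * (c - y) := by
  rw [one_add_inv_mul_sub_eq_div hcy, div_nonneg_iff, mul_nonneg_iff]

variable {ι : Type*}

lemma prod_erase_mul_prod_sdiff_eq {M : Type*} [CommMonoid M] [DecidableEq ι] [Fintype ι]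
    {i j k : ι} {s : Finset ι} (f : ι → M) (hi : i ∈ s) (hj : j ∈ s) (hk : k ∈ s)
    (hij : i ≠ j) (hjk : j ≠ k) (hik : i ≠ k) :
    (∏ l ∈ univ.erase j, f l) * ∏ l ∈ s \ {i, j, k}, f l =
      f i * f k * ((∏ l ∈ sᶜ, f l) * (∏ l ∈ s \ {i, j, k}, f l) ^ 2) := by
  have hsub : s \ {i, j, k} ⊆ univ.erase j := by grind
  have hsdiff : univ.erase j \ (s \ {i, j, k}) = insert i (insert k sᶜ) := by
    ext l
    simp only [mem_sdiff, mem_erase, mem_univ, and_true, mem_insert, mem_singleton, mem_compl]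
    grind
  rw [← prod_sdiff hsub, hsdiff, prod_insert (by simp [hi, hik]), prod_insert (by simp [hk])]
  simp only [sq, mul_assoc]

lemma prod_erase_mul_prod_sdiff_nonpos [DecidableEq ι] [Fintype ι] {i j k : ι} {s : Finset ι}
    {f : ι → ℝ} (hi : i ∈ s) (hj : j ∈ s) (hk : k ∈ s) (hij : i ≠ j) (hjk : j ≠ k) (hik : i ≠ k)
    (hf : f i * f k ≤ 0) (hcompl : ∀ l ∉ s, 0 ≤ f l) :
    (∏ l ∈ univ.erase j, f l) * ∏ l ∈ s \ {i, j, k}, f l ≤ 0 := by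
  rw [prod_erase_mul_prod_sdiff_eq f hi hj hk hij hjk hik]
  exact mul_nonpos_of_nonpos_of_nonneg hf
    (mul_nonneg (prod_nonneg fun l hl ↦ hcompl l (mem_compl.1 hl)) (sq_nonneg _))

variable [LinearOrder ι] {x : ι → ℝ} {i j k : ι} {t : ℝ}

lemma one_add_inv_mul_sub_nonneg_of_mem_Icc (hx : StrictMono x) (hij : i ⋖ j) (hjk : j ⋖ k)
    (ht : t ∈ Set.Icc (x i) (x k)) {l : ι} (hl : l ≠ j) :
    0 ≤ 1 + (x j - x l)⁻¹ * (t - x j) := by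
  rw [one_add_inv_mul_sub_nonneg_iff (hx.injective.ne hl.symm)]
  rcases hl.lt_or_gt with hlj | hjl
  · have : x l ≤ x i := hx.monotone (hij.le_of_lt hlj)
    exact mul_nonneg (by linarith [ht.1]) (sub_nonneg.2 (hx hlj).le)
  · have : x k ≤ x l := hx.monotone (hjk.ge_of_gt hjl)
    exact mul_nonneg_of_nonpos_of_nonpos (by linarith [ht.2]) (sub_nonpos.2 (hx hjl).le)

lemma one_add_inv_mul_sub_neg_of_notMem_Icc (hx : StrictMono x) (hij : i < j) (hjk : j < k)
    (ht : t ∉ Set.Icc (x i) (x k)) :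
    1 + (x j - x i)⁻¹ * (t - x j) < 0 ∨ 1 + (x j - x k)⁻¹ * (t - x j) < 0 := by
  rw [one_add_inv_mul_sub_eq_div (hx hij).ne', one_add_inv_mul_sub_eq_div (hx hjk).ne]
  rw [Set.mem_Icc, not_and_or, not_le, not_le] at ht
  exact ht.imp (fun h ↦ div_neg_of_neg_of_pos (sub_neg.2 h) (sub_pos.2 (hx hij)))
    (fun h ↦ div_neg_of_pos_of_neg (sub_pos.2 h) (sub_neg.2 (hx hjk)))

variable [Fintype ι] {s : Finset ι}

lemma exists_natDegree_lt_basis_mul_le_indicator (hx : StrictMono x) (hij : i ⋖ j) (hjk : j ⋖ k)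
    (hi : i ∈ s) (hj : j ∈ s) (hk : k ∈ s) :
    ∃ G : ℝ[X], G.natDegree < #s ∧ G.eval (x j) = 1 ∧
      ∀ t, (∀ l ∉ s, 0 ≤ (t - x l) * (x j - x l)) →
        (Lagrange.basis univ x j * G).eval t ≤ (Set.Icc (x i) (x k)).indicator 1 t := by
  set u : ι → ℝ := fun l ↦ (x j - x l)⁻¹
  set A := s \ {i, j, k}
  have hp : 0 < u i := inv_pos.2 (sub_pos.2 (hx hij.lt))
  have hm : u k < 0 := inv_lt_zero.2 (sub_neg.2 (hx hjk.lt))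
  have hik := hij.lt.trans hjk.lt
  obtain ⟨γ, δ, hsum, hγ, hcases⟩ := exists_add_eq_and_mem_Icc (hm.le.trans hp.le)
    (-(∑ l ∈ univ.erase j, u l + ∑ l ∈ A, u l))
  refine ⟨(∏ l ∈ A, normalizedLinear (x j) (u l)) *
    (normalizedLinear (x j) γ * normalizedLinear (x j) δ), ?_, by simp [eval_prod],
    fun t hside ↦ ?_⟩
  · have hcard : #A + 3 = #s := by
      rw [← card_eq_three.2 ⟨i, j, k, hij.ne, hik.ne, hjk.ne, rfl⟩]
      exact card_sdiff_add_card_eq_card (by simp [insert_subset_iff, hi, hj, hk])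
    have hdeg := natDegree_prod_normalizedLinear_mul_le A (x j) u γ δ
    omega
  simp only [eval_mul, eval_prod, eval_normalizedLinear,
    eval_basis_eq_prod_erase hx.injective.injOn (mem_univ j)]
  by_cases ht : t ∈ Set.Icc (x i) (x k)
  · rw [Set.indicator_of_mem ht]
    have hnonneg {l : ι} (hl : l ≠ j) := one_add_inv_mul_sub_nonneg_of_mem_Icc hx hij hjk ht hl
    exact prod_mul_prod_mul_le_one (fun l hl ↦ hnonneg (ne_of_mem_erase hl))
      (fun l hl ↦ hnonneg (by simp_all [A]))
      (one_add_mul_nonneg_of_mem_Icc hγ (hnonneg hij.ne) (hnonneg hjk.ne')) hsum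
  · rw [Set.indicator_of_notMem ht, ← mul_assoc]
    have hneg := one_add_inv_mul_sub_neg_of_notMem_Icc hx hij.lt hjk.lt ht
    exact mul_nonpos_of_nonpos_of_nonneg
      (prod_erase_mul_prod_sdiff_nonpos hi hj hk hij.ne hjk.ne hik.ne
        (one_add_mul_mul_one_add_mul_nonpos hp hm hneg) fun l hl ↦
          (one_add_inv_mul_sub_nonneg_iff (hx.injective.ne (ne_of_mem_of_not_mem hj hl))).2
            (hside l hl))
      (one_add_mul_mul_one_add_mul_nonneg hp hm hcases hneg)

end Multiplier

section Quadrature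

open Polynomial Finset

variable {μ : Measure ℝ}

lemma integrable_eval_of_moments (hmom : ∀ m : ℕ, Integrable (fun t : ℝ ↦ t ^ m) μ) (p : ℝ[X]) :
    Integrable (fun t ↦ p.eval t) μ := by
  simp_rw [eval_eq_sum_range]
  exact integrable_finsetSum _ fun m _ ↦ (hmom m).const_mul _

lemma integral_eval_mul_eq_zero (hmom : ∀ m : ℕ, Integrable (fun t : ℝ ↦ t ^ m) μ) {w r : ℝ[X]}
    {n : ℕ} (horth : ∀ m < n, ∫ t, w.eval t * t ^ m ∂μ = 0) (hr : r.degree < n) :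
    ∫ t, (w * r).eval t ∂μ = 0 := by
  have hexpand (t : ℝ) : (w * r).eval t = ∑ m ∈ r.support, r.coeff m * (w.eval t * t ^ m) := by
    rw [eval_mul, eval_eq_sum (p := r), Polynomial.sum, mul_sum]
    exact sum_congr rfl fun m _ ↦ by ring
  have hint (m : ℕ) : Integrable (fun t ↦ w.eval t * t ^ m) μ := by
    simpa only [eval_mul, eval_pow, eval_X] using
      integrable_eval_of_moments hmom (w * (X : ℝ[X]) ^ m)
  simp_rw [hexpand]
  rw [integral_finsetSum _ fun m _ ↦ (hint m).const_mul _]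
  refine sum_eq_zero fun m hm ↦ ?_
  have hmn : m < n := by exact_mod_cast (le_degree_of_mem_supp m hm).trans_lt hr
  rw [integral_const_mul, horth m hmn, mul_zero]

variable {ι : Type*} [Fintype ι] {x : ι → ℝ} {n : ℕ}

-- Equivalent to the exactness of the quadrature rule in degrees below `Fintype.card ι + n`.
lemma integral_eval_eq_of_eval_node_eq (hx : Function.Injective x)
    (hmom : ∀ m : ℕ, Integrable (fun t : ℝ ↦ t ^ m) μ)
    (horth : ∀ m < n, ∫ t, (∏ l, (t - x l)) * t ^ m ∂μ = 0) {p q : ℝ[X]}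
    (hdeg : (p - q).degree < (Fintype.card ι + n : ℕ))
    (heval : ∀ l, p.eval (x l) = q.eval (x l)) :
    ∫ t, p.eval t ∂μ = ∫ t, q.eval t ∂μ := by
  obtain ⟨r, hr⟩ : Lagrange.nodal univ x ∣ p - q :=
    Finset.prod_dvd_of_coprime ((pairwise_coprime_X_sub_C hx).set_pairwise _)
      fun l _ ↦ dvd_iff_isRoot.2 (by simp [heval l])
  have hrdeg : r.degree < n := by
    rw [hr, degree_mul, Lagrange.degree_nodal, card_univ, Nat.cast_add] at hdeg
    exact lt_of_add_lt_add_left hdeg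
  have hzero : ∫ t, (p - q).eval t ∂μ = 0 := by
    rw [hr]
    exact integral_eval_mul_eq_zero hmom (by simpa only [Lagrange.eval_nodal] using horth) hrdeg
  simp_rw [eval_sub] at hzero
  rwa [integral_sub (integrable_eval_of_moments hmom p) (integrable_eval_of_moments hmom q),
    sub_eq_zero] at hzero

lemma integral_basis_mul_eq_integral_basis [DecidableEq ι] (hx : Function.Injective x)
    (hmom : ∀ m : ℕ, Integrable (fun t : ℝ ↦ t ^ m) μ)
    (horth : ∀ m < n, ∫ t, (∏ l, (t - x l)) * t ^ m ∂μ = 0) {j : ι} {G : ℝ[X]}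
    (hdeg : G.natDegree ≤ n) (hG : G.eval (x j) = 1) :
    ∫ t, (Lagrange.basis univ x j * G).eval t ∂μ =
      ∫ t, (Lagrange.basis univ x j).eval t ∂μ := by
  refine integral_eval_eq_of_eval_node_eq hx hmom horth ?_ fun l ↦ ?_
  · have hB := Lagrange.natDegree_basis (s := univ) hx.injOn (mem_univ j)
    have hcard := Fintype.card_pos_iff.2 ⟨j⟩
    rw [card_univ] at hB
    rw [← mul_sub_one]
    refine degree_le_natDegree.trans_lt (Nat.cast_lt.2 ?_)
    calc (Lagrange.basis univ x j * (G - 1)).natDegree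
        ≤ (Fintype.card ι - 1) + n :=
          natDegree_mul_le_of_le hB.le ((natDegree_sub_C (a := (1 : ℝ))).trans_le hdeg)
      _ < Fintype.card ι + n := by omega
  · rcases eq_or_ne j l with rfl | hjl
    · rw [eval_mul, hG, mul_one]
    · rw [eval_mul, Lagrange.eval_basis_of_ne hjl (mem_univ l), zero_mul]

end Quadrature

-- `hside` says that no node outside `s` separates `x j` from the mass of `μ`; for an Angelesco
-- system, `s` consists of the zeros in the interval that carries `μ`.
theorem angelesco_weight_upper_bound_general {ι : Type*} [LinearOrder ι] [Fintype ι]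
    {μ : Measure ℝ} (hmom : ∀ m : ℕ, Integrable (fun t : ℝ ↦ t ^ m) μ)
    {x : ι → ℝ} (hx : StrictMono x) {s : Finset ι}
    (horth : ∀ m, m + 1 < s.card → ∫ t, (∏ l, (t - x l)) * t ^ m ∂μ = 0)
    {i j k : ι} (hij : i ⋖ j) (hjk : j ⋖ k) (hi : i ∈ s) (hj : j ∈ s) (hk : k ∈ s)
    (hside : ∀ᵐ t ∂μ, ∀ l ∉ s, 0 ≤ (t - x l) * (x j - x l)) :
    ∫ t, (Lagrange.basis Finset.univ x j).eval t ∂μ ≤ μ.real (Set.Icc (x i) (x k)) := by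
  have : IsFiniteMeasure μ := by simpa [integrable_const_iff] using hmom 0
  obtain ⟨G, hdeg, hGj, hbound⟩ :=
    exists_natDegree_lt_basis_mul_le_indicator hx hij hjk hi hj hk
  calc ∫ t, (Lagrange.basis Finset.univ x j).eval t ∂μ
      = ∫ t, (Lagrange.basis Finset.univ x j * G).eval t ∂μ :=
        (integral_basis_mul_eq_integral_basis hx.injective hmom
          (fun m hm ↦ horth m (by omega)) le_rfl hGj).symm
    _ ≤ ∫ t, (Set.Icc (x i) (x k)).indicator 1 t ∂μ :=
        integral_mono_ae (integrable_eval_of_moments hmom _)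
          ((integrable_const 1).indicator measurableSet_Icc) (hside.mono hbound)
    _ = μ.real (Set.Icc (x i) (x k)) := integral_indicator_one measurableSet_Icc

lemma Angelesco.ae_sub_mul_sub_nonneg {μ₁ μ₂ : Measure ℝ} {a₁ b₁ a₂ b₂ : ℝ} {n : ℕ}
    (ad : Angelesco μ₁ μ₂ a₁ b₁ a₂ b₂ n) (hgap : b₁ ≤ a₂) (hsupp₁ : μ₁ (Set.Icc a₁ b₁)ᶜ = 0)
    {j : Fin (2 * n)} (hj : (j : ℕ) < n) :
    ∀ᵐ t ∂μ₁, ∀ l : Fin (2 * n), n ≤ (l : ℕ) → 0 ≤ (t - ad.x l) * (ad.x j - ad.x l) := by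
  filter_upwards [mem_ae_iff.2 hsupp₁] with t ht l hl
  have hl₂ := (ad.mem2 l hl).1
  exact mul_nonneg_of_nonpos_of_nonpos (by linarith [ht.2]) (by linarith [(ad.mem1 j hj).2])

/-- **Upper bound for a positive quadrature weight.**
For `2 ≤ ℓ ≤ n − 1` one has `λ_{ℓ,2n}^{(1)} ≤ μ₁([x_{ℓ−1,2n}, x_{ℓ+1,2n}])`
(nodes are `1`-based, so `x_{ℓ,2n}` is `ad.x ⟨ℓ-1,_⟩`). -/
theorem angelesco_weight_upper_bound
    (μ₁ μ₂ : Measure ℝ) [IsFiniteMeasure μ₁] [IsFiniteMeasure μ₂]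
    (a₁ b₁ a₂ b₂ : ℝ) (hab₁ : a₁ < b₁) (hgap : b₁ ≤ a₂) (hab₂ : a₂ < b₂)
    (hsupp₁ : μ₁ (Set.Icc a₁ b₁)ᶜ = 0) (hsupp₂ : μ₂ (Set.Icc a₂ b₂)ᶜ = 0)
    (hinf₁ : ∀ s : Finset ℝ, μ₁ ((s : Set ℝ))ᶜ ≠ 0)
    (hinf₂ : ∀ s : Finset ℝ, μ₂ ((s : Set ℝ))ᶜ ≠ 0)
    (hmom₁ : ∀ k : ℕ, Integrable (fun t : ℝ => t ^ k) μ₁)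
    (hmom₂ : ∀ k : ℕ, Integrable (fun t : ℝ => t ^ k) μ₂)
    (n : ℕ) (hn : 3 ≤ n) (ad : Angelesco μ₁ μ₂ a₁ b₁ a₂ b₂ n)
    (ℓ : ℕ) (hℓ₁ : 2 ≤ ℓ) (hℓ₂ : ℓ ≤ n - 1) :
    qweight ad μ₁ ⟨ℓ - 1, by omega⟩ ≤
      (μ₁ (Set.Icc (ad.x ⟨ℓ - 2, by omega⟩) (ad.x ⟨ℓ, by omega⟩))).toReal := by
  have mem_first {l : Fin (2 * n)} (hl : (l : ℕ) < n) :
      l ∈ Finset.univ.filter fun l : Fin (2 * n) ↦ (l : ℕ) < n := by simpa using hl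
  have covBy {l l' : Fin (2 * n)} (h : (l : ℕ) + 1 = l') : l ⋖ l' := by simpa using h
  have hside := ad.ae_sub_mul_sub_nonneg hgap hsupp₁ (j := ⟨ℓ - 1, by omega⟩)
    (show ℓ - 1 < n by omega)
  refine angelesco_weight_upper_bound_general hmom₁ ad.mono (fun m hm ↦ ad.orth1 m ?_)
    (covBy ?_) (covBy ?_) (mem_first ?_) (mem_first ?_) (mem_first ?_) (by simpa using hside)
  · rw [Fin.card_filter_val_lt] at hm
    omega
  all_goals
    dsimp only
    omega
end

section
/- For every n ≥ 3 and every 2 ≤ ℓ ≤ n − 1, one has λ_{ℓ,2n}^{(1)} + λ_{ℓ+1,2n}^{(1)} ≥ μ₁([x_{ℓ,2n}, x_{ℓ+1,2n}]). -/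
open MeasureTheory

/-!
Chebyshev–Markov–Stieltjes argument: for a node `x_j` in the first interval there are polynomials of
degree at most `3n - 2` that take the values of the step functions `1_{(-∞, x_j]}` and
`1_{(-∞, x_j)}` at all nodes and lie above, respectively below, them on the support of `μ₁`. They
are Hermite interpolants, with double nodes in the first interval except for a simple node at `x_j`,
and simple nodes in the second interval. Applying the quadrature rule bounds `∑_{k ≤ j} λ_k` from
below by `μ₁((-∞, x_j])` and `∑_{k < i} λ_k` from above by `μ₁((-∞, x_i))`; subtracting gives
`μ₁([x_i, x_j]) ≤ ∑_{i ≤ k ≤ j} λ_k`.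

The sign of the interpolation error comes from Neville's recurrence: the step interpolant `P` with
value `1` on `T ∪ {t}` and `0` on `Z ∪ {z}` is the average of those for `(T ∪ {t}, Z)` and
`(T, Z ∪ {z})` with weights `(z - u) / (z - t)` and `(u - t) / (z - t)`, which inductively makes the
cofactors of `P` and `1 - P` nonnegative beyond `T` and before `Z` respectively.
-/

open Polynomial

section StepInterpolation

theorem degree_mul_lt_add_one {R : Type*} [Semiring R] {A P : R[X]} {m : ℕ} (hA : A.degree ≤ 1)
    (hP : P.degree < m) : (A * P).degree < (m + 1 : ℕ) :=
  calc (A * P).degree ≤ 1 + P.degree := (degree_mul_le A P).trans (by gcongr)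
    _ < 1 + (m : WithBot ℕ) := WithBot.add_lt_add_left WithBot.one_ne_bot hP
    _ = (m + 1 : ℕ) := by rw [add_comm]; rfl

variable {K : Type*} [Field K] [LinearOrder K]

/-- `P` is a Hermite interpolant of the step function that equals `1` at the points of `T` and `0`
at the points of `Z`, counted with multiplicity. Interpolation is encoded by the factorizations of
`P` to the right of `T` and of `1 - P` to the left of `Z`, whose nonnegative cofactors determine on
which side of the step function `P` lies. -/
structure IsStepInterpolant (T Z : Multiset K) (P : K[X]) : Prop where
  degree_lt : P.degree < (T.card + Z.card : ℕ)
  eval_eq : ∀ u, (∀ t ∈ T, t ≤ u) → ∃ s ≥ 0, P.eval u = s * (Z.map (· - u)).prod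
  one_sub_eval_eq : ∀ u, (∀ z ∈ Z, u ≤ z) → ∃ s ≥ 0, 1 - P.eval u = s * (T.map (u - ·)).prod

namespace IsStepInterpolant

variable {T Z : Multiset K} {P Q : K[X]} {t z : K}

theorem eval_left (hP : IsStepInterpolant T Z P) (ht : t ∈ T) (hZ : ∀ z ∈ Z, t ≤ z) :
    P.eval t = 1 := by
  obtain ⟨s, -, hs⟩ := hP.one_sub_eval_eq t hZ
  have hprod : (T.map (t - ·)).prod = 0 :=
    Multiset.prod_eq_zero (Multiset.mem_map.2 ⟨t, ht, sub_self t⟩)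
  rw [hprod, mul_zero] at hs
  exact (sub_eq_zero.1 hs).symm

theorem eval_right (hP : IsStepInterpolant T Z P) (hz : z ∈ Z) (hT : ∀ t ∈ T, t ≤ z) :
    P.eval z = 0 := by
  obtain ⟨s, -, hs⟩ := hP.eval_eq z hT
  have hprod : (Z.map (· - z)).prod = 0 :=
    Multiset.prod_eq_zero (Multiset.mem_map.2 ⟨z, hz, sub_self z⟩)
  rw [hs, hprod, mul_zero]

variable [IsStrictOrderedRing K]

theorem zero_left (Z : Multiset K) : IsStepInterpolant 0 Z 0 where
  degree_lt := by
    rw [degree_zero]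
    exact WithBot.bot_lt_coe _
  eval_eq _ _ := ⟨0, le_rfl, by simp⟩
  one_sub_eval_eq _ _ := ⟨1, zero_le_one, by simp⟩

theorem cons_zero (t : K) (T : Multiset K) : IsStepInterpolant (t ::ₘ T) 0 1 where
  degree_lt := by
    rw [degree_one, Multiset.card_cons]
    exact_mod_cast Nat.succ_pos _
  eval_eq _ _ := ⟨1, zero_le_one, by simp⟩
  one_sub_eval_eq _ _ := ⟨0, le_rfl, by simp⟩

/-- Neville's recurrence; it preserves the nonnegativity of both cofactors. -/
theorem cons_cons (htz : t < z) (hP : IsStepInterpolant (t ::ₘ T) Z P)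
    (hQ : IsStepInterpolant T (z ::ₘ Z) Q) :
    IsStepInterpolant (t ::ₘ T) (z ::ₘ Z)
      (C (z - t)⁻¹ * ((C z - X) * P + (X - C t) * Q)) where
  degree_lt := by
    have hPdeg : P.degree < (T.card + Z.card + 1 : ℕ) := by
      simpa only [Multiset.card_cons, add_right_comm] using hP.degree_lt
    have hQdeg : Q.degree < (T.card + Z.card + 1 : ℕ) := by
      simpa only [Multiset.card_cons, add_assoc] using hQ.degree_lt
    have hsub : (C z - X : K[X]).degree ≤ 1 :=
      degree_sub_le_of_le (degree_C_le.trans zero_le_one) degree_X_le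
    have hcard : (t ::ₘ T).card + (z ::ₘ Z).card = T.card + Z.card + 1 + 1 := by
      rw [Multiset.card_cons, Multiset.card_cons]
      ring
    rw [hcard, degree_C_mul (inv_ne_zero (sub_ne_zero.2 htz.ne'))]
    exact (degree_add_le _ _).trans_lt (max_lt (degree_mul_lt_add_one hsub hPdeg)
      (degree_mul_lt_add_one (degree_X_sub_C_le t) hQdeg))
  eval_eq u hu := by
    obtain ⟨p, hp, hPu⟩ := hP.eval_eq u hu
    obtain ⟨q, hq, hQu⟩ := hQ.eval_eq u fun s hs => hu s (Multiset.mem_cons_of_mem hs)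
    have htu : 0 ≤ u - t := sub_nonneg.2 (hu t (Multiset.mem_cons_self t T))
    refine ⟨(z - t)⁻¹ * (p + (u - t) * q), by positivity, ?_⟩
    simp only [eval_mul, eval_add, eval_sub, eval_C, eval_X, hPu, hQu, Multiset.map_cons,
      Multiset.prod_cons]
    ring
  one_sub_eval_eq u hu := by
    obtain ⟨p, hp, hPu⟩ := hP.one_sub_eval_eq u fun s hs => hu s (Multiset.mem_cons_of_mem hs)
    obtain ⟨q, hq, hQu⟩ := hQ.one_sub_eval_eq u hu
    have huz : 0 ≤ z - u := sub_nonneg.2 (hu z (Multiset.mem_cons_self z Z))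
    refine ⟨(z - t)⁻¹ * ((z - u) * p + q), by positivity, ?_⟩
    have hP' : P.eval u = 1 - p * ((t ::ₘ T).map (u - ·)).prod := by linear_combination -hPu
    have hQ' : Q.eval u = 1 - q * (T.map (u - ·)).prod := by linear_combination -hQu
    simp only [eval_mul, eval_add, eval_sub, eval_C, eval_X, hP', hQ', Multiset.map_cons,
      Multiset.prod_cons]
    field_simp
    ring

end IsStepInterpolant

theorem exists_isStepInterpolant [IsStrictOrderedRing K] (T Z : Multiset K)
    (hTZ : ∀ t ∈ T, ∀ z ∈ Z, t < z) : ∃ P, IsStepInterpolant T Z P := by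
  induction T using Multiset.induction generalizing Z with
  | empty => exact ⟨0, .zero_left Z⟩
  | cons t T ihT =>
    induction Z using Multiset.induction with
    | empty => exact ⟨1, .cons_zero t T⟩
    | cons z Z ihZ =>
      obtain ⟨P, hP⟩ := ihZ fun s hs w hw => hTZ s hs w (Multiset.mem_cons_of_mem hw)
      obtain ⟨Q, hQ⟩ := ihT (z ::ₘ Z) fun s hs => hTZ s (Multiset.mem_cons_of_mem hs)
      exact ⟨_, .cons_cons (hTZ t (by simp) z (by simp)) hP hQ⟩

end StepInterpolation

section OneSidedApproximation

variable {α : Type*} {N : ℕ} {c j : Fin N}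

/-- The nodes before `x j`, each counted twice, so that an interpolation error vanishing at them
does not change sign there. -/
def doubledNodesLT (x : Fin N → α) (j : Fin N) : Multiset α :=
  2 • (Finset.Iio j).val.map x

/-- The nodes after `x j`, those up to `x c` counted twice and those beyond `x c` counted once: the
latter need no doubling because only points to their left matter. -/
def partlyDoubledNodesGT (x : Fin N → α) (c j : Fin N) : Multiset α :=
  2 • (Finset.Ioc j c).val.map x + (Finset.Ioi c).val.map x

theorem mem_doubledNodesLT {x : Fin N → α} {t : α} : t ∈ doubledNodesLT x j ↔ ∃ k < j, x k = t := by
  simp [doubledNodesLT, Multiset.mem_nsmul]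

theorem mem_partlyDoubledNodesGT {x : Fin N → α} {t : α} (hjc : j ≤ c) :
    t ∈ partlyDoubledNodesGT x c j ↔ ∃ k > j, x k = t := by
  simp only [partlyDoubledNodesGT, Multiset.mem_add, Multiset.mem_nsmul, Multiset.mem_map,
    Finset.mem_val, Finset.mem_Ioc, Finset.mem_Ioi]
  grind

theorem card_doubledNodesLT_add_card_partlyDoubledNodesGT (x : Fin N → α) (hjc : j ≤ c) :
    (doubledNodesLT x j).card + (partlyDoubledNodesGT x c j).card + 1 = N + c := by
  simp only [doubledNodesLT, partlyDoubledNodesGT, Multiset.card_add, Multiset.card_nsmul,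
    Multiset.card_map, Finset.card_val, Fin.card_Iio, Fin.card_Ioc, Fin.card_Ioi]
  grind

variable {K : Type*} [Field K] [LinearOrder K] [IsStrictOrderedRing K] {x : Fin N → K} {u : K}

theorem prod_doubledNodesLT_nonneg (x : Fin N → K) (j : Fin N) (u : K) :
    0 ≤ ((doubledNodesLT x j).map (u - ·)).prod := by
  simp only [doubledNodesLT, Multiset.map_nsmul, Multiset.prod_nsmul]
  positivity

theorem prod_partlyDoubledNodesGT_nonneg (j : Fin N) (hu : ∀ k > c, u ≤ x k) :
    0 ≤ ((partlyDoubledNodesGT x c j).map (· - u)).prod := by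
  simp only [partlyDoubledNodesGT, Multiset.map_add, Multiset.prod_add, Multiset.map_nsmul,
    Multiset.prod_nsmul]
  refine mul_nonneg (sq_nonneg _) (Multiset.prod_nonneg ?_)
  simpa using hu

theorem exists_polynomial_ge_indicator_Iic (hx : StrictMono x) (hjc : j ≤ c) :
    ∃ P : K[X], P.degree < (N + c : ℕ) ∧ (∀ k, P.eval (x k) = if k ≤ j then 1 else 0) ∧
      ∀ u, (∀ k > c, u ≤ x k) → (Set.Iic (x j)).indicator 1 u ≤ P.eval u := by
  have hleft : ∀ t ∈ x j ::ₘ doubledNodesLT x j, t ≤ x j := by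
    simpa [mem_doubledNodesLT] using fun k (hk : k < j) => (hx hk).le
  have hright : ∀ z ∈ partlyDoubledNodesGT x c j, x j < z := by
    simpa [mem_partlyDoubledNodesGT hjc] using fun k (hk : j < k) => hx hk
  obtain ⟨P, hP⟩ := exists_isStepInterpolant (x j ::ₘ doubledNodesLT x j)
    (partlyDoubledNodesGT x c j) fun t ht z hz => (hleft t ht).trans_lt (hright z hz)
  refine ⟨P, ?_, fun k => ?_, fun u hu => ?_⟩
  · convert hP.degree_lt using 2
    rw [← card_doubledNodesLT_add_card_partlyDoubledNodesGT x hjc, Multiset.card_cons]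
    ring
  · split_ifs with hkj
    · refine hP.eval_left ?_ fun z hz => (hx.monotone hkj).trans (hright z hz).le
      rcases hkj.eq_or_lt with rfl | hlt
      · exact Multiset.mem_cons_self _ _
      · exact Multiset.mem_cons_of_mem (mem_doubledNodesLT.2 ⟨k, hlt, rfl⟩)
    · have hjk : j < k := not_le.1 hkj
      exact hP.eval_right ((mem_partlyDoubledNodesGT hjc).2 ⟨k, hjk, rfl⟩)
        fun t ht => (hleft t ht).trans (hx hjk).le
  · refine Set.indicator_apply_le' (fun huj => ?_) fun huj => ?_
    · obtain ⟨s, hs, h⟩ := hP.one_sub_eval_eq u fun z hz => le_trans huj (hright z hz).le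
      rw [Multiset.map_cons, Multiset.prod_cons] at h
      refine sub_nonpos.1 (h.trans_le (mul_nonpos_of_nonneg_of_nonpos hs ?_))
      exact mul_nonpos_of_nonpos_of_nonneg (sub_nonpos.2 huj) (prod_doubledNodesLT_nonneg x j u)
    · obtain ⟨s, hs, h⟩ := hP.eval_eq u fun t ht => (hleft t ht).trans (not_le.1 huj).le
      exact h ▸ mul_nonneg hs (prod_partlyDoubledNodesGT_nonneg j hu)

theorem exists_polynomial_le_indicator_Iio (hx : StrictMono x) (hjc : j ≤ c) :
    ∃ P : K[X], P.degree < (N + c : ℕ) ∧ (∀ k, P.eval (x k) = if k < j then 1 else 0) ∧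
      ∀ u, (∀ k > c, u ≤ x k) → P.eval u ≤ (Set.Iio (x j)).indicator 1 u := by
  have hleft : ∀ t ∈ doubledNodesLT x j, t < x j := by
    simpa [mem_doubledNodesLT] using fun k (hk : k < j) => hx hk
  have hright : ∀ z ∈ x j ::ₘ partlyDoubledNodesGT x c j, x j ≤ z := by
    simpa [mem_partlyDoubledNodesGT hjc] using fun k (hk : j < k) => (hx hk).le
  obtain ⟨P, hP⟩ := exists_isStepInterpolant (doubledNodesLT x j)
    (x j ::ₘ partlyDoubledNodesGT x c j) fun t ht z hz => (hleft t ht).trans_le (hright z hz)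
  refine ⟨P, ?_, fun k => ?_, fun u hu => ?_⟩
  · convert hP.degree_lt using 2
    rw [← card_doubledNodesLT_add_card_partlyDoubledNodesGT x hjc, Multiset.card_cons]
    ring
  · split_ifs with hkj
    · exact hP.eval_left (mem_doubledNodesLT.2 ⟨k, hkj, rfl⟩)
        fun z hz => (hx hkj).le.trans (hright z hz)
    · have hjk : j ≤ k := not_lt.1 hkj
      refine hP.eval_right ?_ fun t ht => (hleft t ht).le.trans (hx.monotone hjk)
      rcases hjk.eq_or_lt with rfl | hlt
      · exact Multiset.mem_cons_self _ _
      · exact Multiset.mem_cons_of_mem ((mem_partlyDoubledNodesGT hjc).2 ⟨k, hlt, rfl⟩)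
  · refine Set.le_indicator_apply (fun huj => ?_) fun huj => ?_
    · obtain ⟨s, hs, h⟩ := hP.one_sub_eval_eq u fun z hz => (le_of_lt huj).trans (hright z hz)
      exact sub_nonneg.1 (h ▸ mul_nonneg hs (prod_doubledNodesLT_nonneg x j u))
    · have hju : x j ≤ u := not_lt.1 huj
      obtain ⟨s, hs, h⟩ := hP.eval_eq u fun t ht => (hleft t ht).le.trans hju
      rw [Multiset.map_cons, Multiset.prod_cons] at h
      refine h.trans_le (mul_nonpos_of_nonneg_of_nonpos hs ?_)
      exact mul_nonpos_of_nonpos_of_nonneg (sub_nonpos.2 hju)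
        (prod_partlyDoubledNodesGT_nonneg j hu)

end OneSidedApproximation

section Quadrature

variable {μ : Measure ℝ}

theorem integrable_eval_of_moments_s6 (hmom : ∀ k : ℕ, Integrable (fun t : ℝ => t ^ k) μ)
    (P : ℝ[X]) : Integrable (fun t => P.eval t) μ := by
  simp only [eval_eq_sum_range]
  exact integrable_finsetSum _ fun k _ => (hmom k).const_mul _

theorem isFiniteMeasure_of_moments (hmom : ∀ k : ℕ, Integrable (fun t : ℝ => t ^ k) μ) :
    IsFiniteMeasure μ := by
  simpa [integrable_const_iff] using hmom 0

theorem integral_eval_mul_eq_zero_of_orthogonal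
    (hmom : ∀ k : ℕ, Integrable (fun t : ℝ => t ^ k) μ) {W Q : ℝ[X]} {m : ℕ}
    (horth : ∀ k < m, ∫ t, W.eval t * t ^ k ∂μ = 0) (hQ : Q.degree < m) :
    ∫ t, (W * Q).eval t ∂μ = 0 := by
  have hexpand : ∀ t, (W * Q).eval t =
      ∑ k ∈ Finset.range (Q.natDegree + 1), Q.coeff k * (W.eval t * t ^ k) := fun t => by
    rw [eval_mul, eval_eq_sum_range (p := Q), Finset.mul_sum]
    exact Finset.sum_congr rfl fun k _ => by ring
  have hint (k : ℕ) : Integrable (fun t => W.eval t * t ^ k) μ :=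
    (integrable_eval_of_moments_s6 hmom (W * X ^ k)).congr
      (.of_forall fun t => by simp only [eval_mul, eval_pow, eval_X])
  simp_rw [hexpand]
  rw [integral_finsetSum _ fun k _ => (hint k).const_mul _]
  refine Finset.sum_eq_zero fun k _ => ?_
  rw [integral_const_mul]
  rcases lt_or_ge k m with hkm | hmk
  · rw [horth k hkm, mul_zero]
  · rw [coeff_eq_zero_of_degree_lt (hQ.trans_le (by exact_mod_cast hmk)), zero_mul]

/-- The `k`-th weight `∫ ℓₖ dμ` of the interpolatory quadrature rule with nodes `x`. -/
noncomputable def lagrangeWeight {ι : Type*} [Fintype ι] [DecidableEq ι] (μ : Measure ℝ)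
    (x : ι → ℝ) (k : ι) : ℝ :=
  ∫ t, (Lagrange.basis Finset.univ x k).eval t ∂μ

theorem modByMonic_nodal_eq_interpolate_s6 {F ι : Type*} [Field F] [DecidableEq ι] {s : Finset ι}
    {x : ι → F} (hx : Set.InjOn x s) (P : F[X]) :
    P %ₘ Lagrange.nodal s x = Lagrange.interpolate s x fun k => P.eval (x k) := by
  refine Lagrange.eq_interpolate_of_eval_eq _ hx ?_ fun k hk => ?_
  · simpa only [Lagrange.degree_nodal] using degree_modByMonic_lt P Lagrange.nodal_monic
  · exact eval₂_modByMonic_eq_self_of_root (f := RingHom.id F) (Lagrange.eval_nodal_at_node hk)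

theorem degree_divByMonic_lt_of_degree_lt_add {R : Type*} [CommRing R] {P W : R[X]} {m : ℕ}
    (hW : W.Monic) (hP : P.degree < W.degree + m) : (P /ₘ W).degree < m := by
  nontriviality R
  rcases lt_or_ge P.degree W.degree with hlt | hge
  · rw [(divByMonic_eq_zero_iff hW).2 hlt, degree_zero]
    exact WithBot.bot_lt_coe m
  · rw [← degree_add_divByMonic hW hge] at hP
    exact lt_of_add_lt_add_left hP

theorem integral_eq_sum_lagrangeWeight {ι : Type*} [Fintype ι] [DecidableEq ι]
    (hmom : ∀ k : ℕ, Integrable (fun t : ℝ => t ^ k) μ) {x : ι → ℝ} (hx : Function.Injective x)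
    {m : ℕ} (horth : ∀ k < m, ∫ t, (∏ i, (t - x i)) * t ^ k ∂μ = 0)
    {P : ℝ[X]} (hP : P.degree < (Fintype.card ι + m : ℕ)) :
    ∫ t, P.eval t ∂μ = ∑ k, P.eval (x k) * lagrangeWeight μ x k := by
  have hdecomp : ∀ t, P.eval t =
      (∑ k, P.eval (x k) * (Lagrange.basis Finset.univ x k).eval t) +
        (Lagrange.nodal Finset.univ x * (P /ₘ Lagrange.nodal Finset.univ x)).eval t := fun t => by
    conv_lhs => rw [← modByMonic_add_div P (Lagrange.nodal Finset.univ x)]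
    rw [modByMonic_nodal_eq_interpolate_s6 hx.injOn, Lagrange.interpolate_apply, eval_add,
      eval_finsetSum]
    simp only [eval_mul, eval_C]
  have hbasis (k : ι) :
      Integrable (fun t => P.eval (x k) * (Lagrange.basis Finset.univ x k).eval t) μ :=
    (integrable_eval_of_moments_s6 hmom _).const_mul _
  have hnodal :
      ∫ t, (Lagrange.nodal Finset.univ x * (P /ₘ Lagrange.nodal Finset.univ x)).eval t ∂μ = 0 :=
    integral_eval_mul_eq_zero_of_orthogonal hmom (by simpa only [Lagrange.eval_nodal] using horth)
      (degree_divByMonic_lt_of_degree_lt_add Lagrange.nodal_monic (by simpa using hP))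
  rw [integral_congr_ae (.of_forall hdecomp),
    integral_add (integrable_finsetSum _ fun k _ => hbasis k) (integrable_eval_of_moments_s6 hmom _),
    hnodal, add_zero, integral_finsetSum _ fun k _ => hbasis k]
  exact Finset.sum_congr rfl fun k _ => integral_const_mul _ _

end Quadrature

section Separation

variable {μ : Measure ℝ} {N : ℕ} {x : Fin N → ℝ} {c i j : Fin N}

theorem measureReal_Iic_le_sum_lagrangeWeight
    (hmom : ∀ k : ℕ, Integrable (fun t : ℝ => t ^ k) μ) (hx : StrictMono x)
    (hsupp : ∀ᵐ t ∂μ, ∀ k > c, t ≤ x k)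
    (horth : ∀ k < (c : ℕ), ∫ t, (∏ i, (t - x i)) * t ^ k ∂μ = 0) (hjc : j ≤ c) :
    μ.real (Set.Iic (x j)) ≤ ∑ k ∈ Finset.Iic j, lagrangeWeight μ x k := by
  have := isFiniteMeasure_of_moments hmom
  obtain ⟨P, hdeg, hnode, hge⟩ := exists_polynomial_ge_indicator_Iic hx hjc
  calc μ.real (Set.Iic (x j)) = ∫ t, (Set.Iic (x j)).indicator 1 t ∂μ :=
        (integral_indicator_one measurableSet_Iic).symm
    _ ≤ ∫ t, P.eval t ∂μ := by
        refine integral_mono_ae ((integrable_const 1).indicator measurableSet_Iic)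
          (integrable_eval_of_moments_s6 hmom P) ?_
        filter_upwards [hsupp] using hge
    _ = ∑ k, P.eval (x k) * lagrangeWeight μ x k :=
        integral_eq_sum_lagrangeWeight hmom hx.injective horth (by rwa [Fintype.card_fin])
    _ = ∑ k ∈ Finset.Iic j, lagrangeWeight μ x k := by
        simp [hnode, ← Finset.sum_filter, Finset.filter_ge_eq_Iic]

theorem sum_lagrangeWeight_le_measureReal_Iio
    (hmom : ∀ k : ℕ, Integrable (fun t : ℝ => t ^ k) μ) (hx : StrictMono x)
    (hsupp : ∀ᵐ t ∂μ, ∀ k > c, t ≤ x k)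
    (horth : ∀ k < (c : ℕ), ∫ t, (∏ i, (t - x i)) * t ^ k ∂μ = 0) (hic : i ≤ c) :
    ∑ k ∈ Finset.Iio i, lagrangeWeight μ x k ≤ μ.real (Set.Iio (x i)) := by
  have := isFiniteMeasure_of_moments hmom
  obtain ⟨P, hdeg, hnode, hle⟩ := exists_polynomial_le_indicator_Iio hx hic
  calc ∑ k ∈ Finset.Iio i, lagrangeWeight μ x k
      = ∑ k, P.eval (x k) * lagrangeWeight μ x k := by
        simp [hnode, ← Finset.sum_filter, Finset.filter_gt_eq_Iio]
    _ = ∫ t, P.eval t ∂μ :=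
        (integral_eq_sum_lagrangeWeight hmom hx.injective horth (by rwa [Fintype.card_fin])).symm
    _ ≤ ∫ t, (Set.Iio (x i)).indicator 1 t ∂μ := by
        refine integral_mono_ae (integrable_eval_of_moments_s6 hmom P)
          ((integrable_const 1).indicator measurableSet_Iio) ?_
        filter_upwards [hsupp] using hle
    _ = μ.real (Set.Iio (x i)) := integral_indicator_one measurableSet_Iio

/-- `x c` is the last node that may lie inside the support of `μ`. With all `N = c + 1` nodes inside
this is the classical Chebyshev–Markov–Stieltjes bound; in the Angelesco case `N = 2n` and
`c = n - 1` in `0`-based indexing. -/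
theorem angelesco_consecutive_weights_lower_bound_general
    (hmom : ∀ k : ℕ, Integrable (fun t : ℝ => t ^ k) μ) (hx : StrictMono x)
    (hsupp : ∀ᵐ t ∂μ, ∀ k > c, t ≤ x k)
    (horth : ∀ k < (c : ℕ), ∫ t, (∏ i, (t - x i)) * t ^ k ∂μ = 0) (hij : i ≤ j) (hjc : j ≤ c) :
    μ.real (Set.Icc (x i) (x j)) ≤ ∑ k ∈ Finset.Icc i j, lagrangeWeight μ x k := by
  have := isFiniteMeasure_of_moments hmom
  have hmeasure :
      μ.real (Set.Iio (x i)) + μ.real (Set.Icc (x i) (x j)) = μ.real (Set.Iic (x j)) := by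
    have hdisj : Disjoint (Set.Iio (x i)) (Set.Icc (x i) (x j)) :=
      (Set.Iio_disjoint_Ici le_rfl).mono_right Set.Icc_subset_Ici_self
    rw [← measureReal_union hdisj measurableSet_Icc, Set.Iio_union_Icc_eq_Iic (hx.monotone hij)]
  have hweights : ∑ k ∈ Finset.Iio i, lagrangeWeight μ x k +
      ∑ k ∈ Finset.Icc i j, lagrangeWeight μ x k = ∑ k ∈ Finset.Iic j, lagrangeWeight μ x k := by
    have hdisj : Disjoint (Finset.Iio i) (Finset.Icc i j) :=
      Finset.disjoint_left.2 fun k hki hk =>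
        (Finset.mem_Icc.1 hk).1.not_gt (Finset.mem_Iio.1 hki)
    have hunion : Finset.Iio i ∪ Finset.Icc i j = Finset.Iic j := by
      simpa only [← Finset.coe_inj, Finset.coe_union, Finset.coe_Iio, Finset.coe_Icc,
        Finset.coe_Iic] using Set.Iio_union_Icc_eq_Iic hij
    rw [← Finset.sum_union hdisj, hunion]
  linarith [measureReal_Iic_le_sum_lagrangeWeight hmom hx hsupp horth hjc,
    sum_lagrangeWeight_le_measureReal_Iio hmom hx hsupp horth (hij.trans hjc)]

end Separation

theorem sum_Icc_of_covBy {α M : Type*} [PartialOrder α] [LocallyFiniteOrder α] [AddCommMonoid M]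
    {a b : α} (h : a ⋖ b) (f : α → M) : ∑ k ∈ Finset.Icc a b, f k = f a + f b := by
  classical
  have hIcc : Finset.Icc a b = {a, b} := by
    rw [← Finset.coe_inj, Finset.coe_Icc, Finset.coe_pair, h.Icc_eq]
  rw [hIcc, Finset.sum_pair h.ne]

theorem Angelesco.ae_forall_le_x {μ₁ μ₂ : Measure ℝ} {a₁ b₁ a₂ b₂ : ℝ} {n : ℕ}
    (ad : Angelesco μ₁ μ₂ a₁ b₁ a₂ b₂ n) (hgap : b₁ ≤ a₂) (hsupp : μ₁ (Set.Icc a₁ b₁)ᶜ = 0) :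
    ∀ᵐ t ∂μ₁, ∀ k : Fin (2 * n), n ≤ (k : ℕ) → t ≤ ad.x k := by
  filter_upwards [hsupp] with t ht k hk
  exact (ht.2.trans hgap).trans (ad.mem2 k hk).1.le

/-- **Lower bound for the sum of two consecutive positive quadrature weights.**
For `2 ≤ ℓ ≤ n − 1` one has `λ_{ℓ,2n}^{(1)} + λ_{ℓ+1,2n}^{(1)} ≥ μ₁([x_{ℓ,2n}, x_{ℓ+1,2n}])`
(nodes are `1`-based, so `x_{ℓ,2n}` is `ad.x ⟨ℓ-1,_⟩`). -/
theorem angelesco_consecutive_weights_lower_bound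
    (μ₁ μ₂ : Measure ℝ) [IsFiniteMeasure μ₁] [IsFiniteMeasure μ₂]
    (a₁ b₁ a₂ b₂ : ℝ) (hab₁ : a₁ < b₁) (hgap : b₁ ≤ a₂) (hab₂ : a₂ < b₂)
    (hsupp₁ : μ₁ (Set.Icc a₁ b₁)ᶜ = 0) (hsupp₂ : μ₂ (Set.Icc a₂ b₂)ᶜ = 0)
    (hinf₁ : ∀ s : Finset ℝ, μ₁ ((s : Set ℝ))ᶜ ≠ 0)
    (hinf₂ : ∀ s : Finset ℝ, μ₂ ((s : Set ℝ))ᶜ ≠ 0)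
    (hmom₁ : ∀ k : ℕ, Integrable (fun t : ℝ => t ^ k) μ₁)
    (hmom₂ : ∀ k : ℕ, Integrable (fun t : ℝ => t ^ k) μ₂)
    (n : ℕ) (hn : 3 ≤ n) (ad : Angelesco μ₁ μ₂ a₁ b₁ a₂ b₂ n)
    (ℓ : ℕ) (hℓ₁ : 2 ≤ ℓ) (hℓ₂ : ℓ ≤ n - 1) :
    (μ₁ (Set.Icc (ad.x ⟨ℓ - 1, by omega⟩) (ad.x ⟨ℓ, by omega⟩))).toReal ≤
      qweight ad μ₁ ⟨ℓ - 1, by omega⟩ + qweight ad μ₁ ⟨ℓ, by omega⟩ := by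
  have hcovBy : (⟨ℓ - 1, by omega⟩ : Fin (2 * n)) ⋖ ⟨ℓ, by omega⟩ :=
    Fin.covBy_iff.2 (Nat.covBy_iff_add_one_eq.2 (by simp only; omega))
  refine (angelesco_consecutive_weights_lower_bound_general (c := ⟨n - 1, by omega⟩) hmom₁ ad.mono
    ?_ (fun k hk => ad.orth1 k (hk.trans_le (Nat.sub_le n 1))) hcovBy.le hℓ₂).trans_eq
    (sum_Icc_of_covBy hcovBy _)
  filter_upwards [ad.ae_forall_le_x hgap hsupp₁] with t ht k hk
  exact ht k (Nat.le_of_pred_lt hk)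
end
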